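/- arXiv:1809.02315 — 3 statements merged into one kernel-verified Lean document; each statement's English description precedes it below -/
import Mathlib

section
/- Let U be a subcategory of T that is closed under direct sums and direct summands. Then (U,U) is a cotorsion pair in T if and only if U is a cluster tilting subcategory of T. -/
/-!
The mechanism in both directions is the long exact Hom sequence of a distinguished triangle.

If `(U, U)` is a cotorsion pair, the two triangles attached to an object `B` give a right and a
left `U`-approximation of `B`, because a morphism from `U` to the shift of `U` vanishes. If `B`
lies in a perpendicular category of `U`, the connecting morphism of one of these triangles is
zero, so the triangle splits and `B` is a summand of an object of `U`.

If `U` is cluster tilting, complete a right `U`-approximation `C₀ ⟶ B` to a triangle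
`V ⟶ C₀ ⟶ B ⟶ V⟦1⟧`. For `C` in `U`, the map `Hom(C, C₀) ⟶ Hom(C, B)` is surjective and
`Hom(C, C₀⟦1⟧) = 0`, hence `Hom(C, V⟦1⟧) = 0` and `V` lies in `rightPerp U = U`. Neither minimality
of the approximation nor the Krull–Schmidt property is needed, since `U = rightPerp U` together
with rigidity replaces the usual appeal to Wakamatsu's lemma. The other triangle is dual.
-/

open CategoryTheory CategoryTheory.Limits CategoryTheory.Pretriangulated

attribute [local instance] CategoryTheory.Limits.hasBinaryBiproducts_of_finite_biproducts

universe v u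

namespace ClusterPaper

variable {T : Type u} [Category.{v} T] [Preadditive T] [HasZeroObject T]
  [HasShift T ℤ] [∀ n : ℤ, (shiftFunctor T n).Additive] [Pretriangulated T]
  [HasFiniteBiproducts T]

/-- `X` is a direct summand of `Z`. -/
def IsSummand (X Z : T) : Prop :=
  ∃ (s : X ⟶ Z) (r : Z ⟶ X), s ≫ r = 𝟙 X

/-- The category is Krull–Schmidt: every object is a finite direct sum of objects
whose endomorphism rings are local. -/
def IsKrullSchmidt : Prop :=
  ∀ X : T, ∃ (n : ℕ) (f : Fin n → T),
    Nonempty (X ≅ ⨁ f) ∧ ∀ i, IsLocalRing (End (f i))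

/-- A class of objects is closed under isomorphisms. -/
def IsoClosed (P : T → Prop) : Prop := ∀ ⦃X Y : T⦄, (X ≅ Y) → P X → P Y

/-- A class of objects is closed under finite direct sums. -/
def SumClosed (P : T → Prop) : Prop :=
  ∀ ⦃X Y : T⦄, P X → P Y → P (X ⊞ Y)

/-- A class of objects is closed under direct summands. -/
def SummandClosed (P : T → Prop) : Prop := ∀ ⦃X Z : T⦄, IsSummand X Z → P Z → P X

/-- `Hom(X, Y[1]) = 0`, i.e. `E(X,Y) = 0` for the extriangulated structure on a
triangulated category. -/
def Ext1Zero (X Y : T) : Prop := ∀ f : X ⟶ Y⟦(1 : ℤ)⟧, f = 0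

/-- The right perpendicular category `P^⊥1`. -/
def rightPerp (P : T → Prop) : T → Prop := fun X => ∀ ⦃C : T⦄, P C → Ext1Zero C X

/-- The left perpendicular category `^⊥1 P`. -/
def leftPerp (P : T → Prop) : T → Prop := fun X => ∀ ⦃C : T⦄, P C → Ext1Zero X C

/-- A cotorsion pair `(U, V)`. -/
structure CotorsionPair (U V : T → Prop) : Prop where
  summandClosed_fst : SummandClosed U
  summandClosed_snd : SummandClosed V
  ext_zero : ∀ ⦃X Y : T⦄, U X → V Y → Ext1Zero X Y
  tri_left : ∀ B : T, ∃ (VB UB : T) (f : VB ⟶ UB) (g : UB ⟶ B) (h : B ⟶ VB⟦(1 : ℤ)⟧),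
    V VB ∧ U UB ∧ Triangle.mk f g h ∈ distTriang T
  tri_right : ∀ B : T, ∃ (VB UB : T) (f : B ⟶ VB) (g : VB ⟶ UB) (h : UB ⟶ B⟦(1 : ℤ)⟧),
    V VB ∧ U UB ∧ Triangle.mk f g h ∈ distTriang T

/-- `f : C₀ ⟶ X` is a right `P`-approximation of `X`. -/
def IsRightApprox (P : T → Prop) {C₀ X : T} (f : C₀ ⟶ X) : Prop :=
  ∀ ⦃C' : T⦄, P C' → ∀ g : C' ⟶ X, ∃ h : C' ⟶ C₀, h ≫ f = g

/-- `f : X ⟶ C₀` is a left `P`-approximation of `X`. -/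
def IsLeftApprox (P : T → Prop) {X C₀ : T} (f : X ⟶ C₀) : Prop :=
  ∀ ⦃C' : T⦄, P C' → ∀ g : X ⟶ C', ∃ h : C₀ ⟶ C', f ≫ h = g

/-- Every object admits a right `P`-approximation. -/
def ContravariantlyFinite (P : T → Prop) : Prop :=
  ∀ X : T, ∃ (C₀ : T) (f : C₀ ⟶ X), P C₀ ∧ IsRightApprox P f

/-- Every object admits a left `P`-approximation. -/
def CovariantlyFinite (P : T → Prop) : Prop :=
  ∀ X : T, ∃ (C₀ : T) (f : X ⟶ C₀), P C₀ ∧ IsLeftApprox P f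

/-- A pre-cluster tilting subcategory. -/
structure PreClusterTilting (C : T → Prop) : Prop where
  sumClosed : SumClosed C
  summandClosed : SummandClosed C
  rigid : ∀ ⦃X Y : T⦄, C X → C Y → Ext1Zero X Y
  contravariantlyFinite : ContravariantlyFinite C
  covariantlyFinite : CovariantlyFinite C
  perp_eq : rightPerp C = leftPerp C

/-- A cluster tilting subcategory. -/
structure ClusterTilting (C : T → Prop) extends PreClusterTilting C : Prop where
  eq_rightPerp : C = rightPerp C
  eq_leftPerp : C = leftPerp C

/-- `f` factors through an object of `D`. -/
def FactorsThru (D : T → Prop) {X Y : T} (f : X ⟶ Y) : Prop :=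
  ∃ (Z : T) (g : X ⟶ Z) (h : Z ⟶ Y), D Z ∧ g ≫ h = f

/-- The hom relation identifying two morphisms whose difference factors through `D`. -/
def quotRel (D : T → Prop) : HomRel T := fun {X Y} f g => FactorsThru D (f - g)

/-- The additive quotient category `T/D`. -/
abbrev QuotCat (D : T → Prop) := CategoryTheory.Quotient (quotRel D)

/-- A category is abelian (as a property): it admits an abelian structure. -/
def IsAbelian (A : Type*) [Category A] : Prop := Nonempty (Abelian A)

/-- An object is indecomposable: it is nonzero, and in any direct sum
decomposition one summand is zero. -/
def Indec (X : T) : Prop :=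
  ¬ IsZero X ∧ ∀ (Y Z : T), (X ≅ Y ⊞ Z) → IsZero Y ∨ IsZero Z

/-- `X ∈ CoCone(P, Q)`: there is a triangle `X → B → C' → X[1]` with `B ∈ P`, `C' ∈ Q`. -/
def CoCone (P Q : T → Prop) : T → Prop := fun X =>
  ∃ (B C' : T) (f : X ⟶ B) (g : B ⟶ C') (h : C' ⟶ X⟦(1 : ℤ)⟧),
    P B ∧ Q C' ∧ Triangle.mk f g h ∈ distTriang T

/-- `Y ∈ Cone(P, Q)`: there is a triangle `A → B → Y → A[1]` with `A ∈ P`, `B ∈ Q`. -/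
def Cone (P Q : T → Prop) : T → Prop := fun Y =>
  ∃ (A B : T) (f : A ⟶ B) (g : B ⟶ Y) (h : Y ⟶ A⟦(1 : ℤ)⟧),
    P A ∧ Q B ∧ Triangle.mk f g h ∈ distTriang T

/-- `U + V`: objects isomorphic to a direct sum of an object of `U` and an object of `V`. -/
def plusCat (U V : T → Prop) : T → Prop := fun X =>
  ∃ (A B : T), U A ∧ V B ∧ Nonempty (X ≅ A ⊞ B)

/-- A class of objects is closed under extensions. -/
def ExtClosed (P : T → Prop) : Prop :=
  ∀ ⦃A B C' : T⦄ (f : A ⟶ B) (g : B ⟶ C') (h : C' ⟶ A⟦(1 : ℤ)⟧),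
    (Triangle.mk f g h ∈ distTriang T) → P A → P C' → P B

/-- The triangulated category `T` is connected: it is not the direct sum of two
nonzero triangulated (iso-closed, summand-closed, extension-closed, mutually Hom-orthogonal)
subcategories. -/
def ConnectedCat : Prop :=
  ¬ ∃ (T₁ T₂ : T → Prop),
    IsoClosed T₁ ∧ IsoClosed T₂ ∧ SummandClosed T₁ ∧ SummandClosed T₂ ∧
    ExtClosed T₁ ∧ ExtClosed T₂ ∧
    (∃ X, T₁ X ∧ ¬ IsZero X) ∧ (∃ X, T₂ X ∧ ¬ IsZero X) ∧
    (∀ X : T, ∃ (A B : T), T₁ A ∧ T₂ B ∧ Nonempty (X ≅ A ⊞ B)) ∧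
    (∀ ⦃X Y : T⦄, T₁ X → T₂ Y → ∀ f : X ⟶ Y, f = 0) ∧
    (∀ ⦃X Y : T⦄, T₂ X → T₁ Y → ∀ f : X ⟶ Y, f = 0)

/-- Exactness of `Hom(obj₂, X) ⟶ Hom(obj₁, X) ⟶ Hom(obj₃, X⟦1⟧)`. -/
lemma exists_factor_mor₁ {A B D X : T} {f : A ⟶ B} {g : B ⟶ D} {h : D ⟶ A⟦(1 : ℤ)⟧}
    (hT : Triangle.mk f g h ∈ distTriang T) (a : A ⟶ X) (ha : h ≫ a⟦(1 : ℤ)⟧' = 0) :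
    ∃ b : B ⟶ X, f ≫ b = a := by
  obtain ⟨k, hk⟩ : ∃ k : B⟦(1 : ℤ)⟧ ⟶ X⟦(1 : ℤ)⟧, a⟦(1 : ℤ)⟧' = (-f⟦(1 : ℤ)⟧') ≫ k :=
    Triangle.yoneda_exact₃ _ (rot_of_distTriang _ hT) (a⟦(1 : ℤ)⟧') ha
  obtain ⟨k', rfl⟩ := (shiftFunctor T (1 : ℤ)).map_surjective k
  refine ⟨-k', (shiftFunctor T (1 : ℤ)).map_injective ?_⟩
  rw [hk]
  simp

/-- The cocone of a right approximation by a rigid class lies in its right perpendicular. -/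
lemma rightPerp_of_isRightApprox {U : T → Prop}
    (hU : ∀ ⦃X Y : T⦄, U X → U Y → Ext1Zero X Y)
    {V C₀ B : T} {f : V ⟶ C₀} {g : C₀ ⟶ B} {h : B ⟶ V⟦(1 : ℤ)⟧}
    (hT : Triangle.mk f g h ∈ distTriang T) (hC₀ : U C₀) (hg : IsRightApprox U g) :
    rightPerp U V := by
  intro C hC φ
  obtain ⟨k, hk⟩ : ∃ k : C ⟶ B, φ = k ≫ h :=
    Triangle.coyoneda_exact₁ _ hT φ (hU hC hC₀ _)
  obtain ⟨m, rfl⟩ := hg hC k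
  have hgh : g ≫ h = 0 := comp_distTriang_mor_zero₂₃ _ hT
  rw [hk, Category.assoc, hgh, comp_zero]

/-- The cone of a left approximation by a rigid class lies in its left perpendicular. -/
lemma leftPerp_of_isLeftApprox {U : T → Prop}
    (hU : ∀ ⦃X Y : T⦄, U X → U Y → Ext1Zero X Y)
    {B C₀ W : T} {f : B ⟶ C₀} {g : C₀ ⟶ W} {h : W ⟶ B⟦(1 : ℤ)⟧}
    (hT : Triangle.mk f g h ∈ distTriang T) (hC₀ : U C₀) (hf : IsLeftApprox U f) :
    leftPerp U W := by
  intro C hC φ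
  obtain ⟨k, hk⟩ : ∃ k : B⟦(1 : ℤ)⟧ ⟶ C⟦(1 : ℤ)⟧, φ = h ≫ k :=
    Triangle.yoneda_exact₃ _ hT φ (hU hC₀ hC _)
  obtain ⟨k', rfl⟩ := (shiftFunctor T (1 : ℤ)).map_surjective k
  obtain ⟨m, rfl⟩ := hf hC k'
  have hhf : h ≫ f⟦(1 : ℤ)⟧' = 0 := comp_distTriang_mor_zero₃₁ _ hT
  rw [hk, Functor.map_comp, reassoc_of% hhf, zero_comp]

lemma CotorsionPair.contravariantlyFinite {U V : T → Prop} (h : CotorsionPair U V) :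
    ContravariantlyFinite U := by
  intro B
  obtain ⟨VB, UB, f, g, d, hV, hU, hT⟩ := h.tri_left B
  refine ⟨UB, g, hU, fun C hC φ => ?_⟩
  obtain ⟨m, hm⟩ := Triangle.coyoneda_exact₃ _ hT φ (h.ext_zero hC hV _)
  exact ⟨m, hm.symm⟩

lemma CotorsionPair.covariantlyFinite {U V : T → Prop} (h : CotorsionPair U V) :
    CovariantlyFinite V := by
  intro B
  obtain ⟨VB, UB, f, g, d, hV, hU, hT⟩ := h.tri_right B
  exact ⟨VB, f, hV, fun C hC φ => exists_factor_mor₁ hT φ (h.ext_zero hU hC _)⟩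

lemma CotorsionPair.eq_rightPerp {U V : T → Prop} (h : CotorsionPair U V) :
    V = rightPerp U := by
  funext X
  refine propext ⟨fun hX C hC => h.ext_zero hC hX, fun hX => ?_⟩
  obtain ⟨VB, UB, f, g, d, hV, hU, hT⟩ := h.tri_right X
  obtain ⟨r, hr⟩ := exists_factor_mor₁ hT (𝟙 X) (hX hU _)
  exact h.summandClosed_snd ⟨f, r, hr⟩ hV

lemma CotorsionPair.eq_leftPerp {U V : T → Prop} (h : CotorsionPair U V) :
    U = leftPerp V := by
  funext X
  refine propext ⟨fun hX C hC => h.ext_zero hX hC, fun hX => ?_⟩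
  obtain ⟨VB, UB, f, g, d, hV, hU, hT⟩ := h.tri_left X
  have hd : d = 0 := hX hV d
  obtain ⟨s, hs⟩ := Triangle.coyoneda_exact₃ _ hT (𝟙 X) ((Category.id_comp d).trans hd)
  exact h.summandClosed_fst ⟨s, g, hs.symm⟩ hU

/-- For a subcategory `U` closed under direct sums and direct summands,
`(U, U)` is a cotorsion pair in `T` iff `U` is a cluster tilting subcategory of `T`. -/
theorem stmt0 [IsTriangulated T] (hKS : IsKrullSchmidt (T := T))
    (U : T → Prop) (hUiso : IsoClosed U) (hUsum : SumClosed U) (hUsummand : SummandClosed U) :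
    CotorsionPair U U ↔ ClusterTilting U := by
  constructor
  · intro h
    exact
      { sumClosed := hUsum
        summandClosed := hUsummand
        rigid := h.ext_zero
        contravariantlyFinite := h.contravariantlyFinite
        covariantlyFinite := h.covariantlyFinite
        perp_eq := h.eq_rightPerp.symm.trans h.eq_leftPerp
        eq_rightPerp := h.eq_rightPerp
        eq_leftPerp := h.eq_leftPerp }
  · intro h
    refine ⟨hUsummand, hUsummand, h.rigid, fun B => ?_, fun B => ?_⟩
    · obtain ⟨C₀, g, hC₀, hg⟩ := h.contravariantlyFinite B
      obtain ⟨V, f, d, hT⟩ := distinguished_cocone_triangle₁ g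
      refine ⟨V, C₀, f, g, d, ?_, hC₀, hT⟩
      rw [h.eq_rightPerp]
      exact rightPerp_of_isRightApprox h.rigid hT hC₀ hg
    · obtain ⟨C₀, f, hC₀, hf⟩ := h.covariantlyFinite B
      obtain ⟨W, g, d, hT⟩ := distinguished_cocone_triangle f
      refine ⟨C₀, W, f, g, d, hC₀, ?_, hT⟩
      rw [h.eq_leftPerp]
      exact leftPerp_of_isLeftApprox h.rigid hT hC₀ hf

end ClusterPaper
end

section
/- Let (U,V) and (V,U) be cotorsion pairs in T, and set C := U ∩ V and K := U + V, the subcategory of objects isomorphic to X ⊕ Y with X in U and Y in V. Then (C,K) and (K,C) are cotorsion pairs in T; in particular, C is a pre-cluster tilting subcategory of T. -/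
/-!
The pair `(C, K)` with `C = U ∩ V`, `K = U + V` is obtained by gluing approximation triangles of
`(U, V)` and `(V, U)`. For instance, given `B`, take triangles `V_B → U_B → B` and
`U' → C' → U_B` of the two pairs. As `U` is the class of `X` with `Hom(X, V[1]) = 0`, it is
closed under extensions, so `C'` lies in `C`. The octahedral axiom applied to `C' → U_B → B` shows
that the cocone of the composite is an extension of `V_B` by `U'`; since `Hom(V, U[1]) = 0`, this
extension splits, and the cocone lies in `K`. The other three triangles are built in the
same way, from other composable pairs of morphisms (`octahedron_split`).

Vanishing of `Hom(C, K[1])` and `Hom(K, C[1])` is immediate. Closure of `K` under direct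
summands is where the Krull–Schmidt property enters: a summand of `A ⊞ B` with local endomorphism
ring is a summand of `A` or of `B` (`isSummand_or_of_isLocalRing`).

Finally, `C^⊥1 = K = ^⊥1C` because the approximation triangle of an object orthogonal to one half of
a cotorsion pair splits, making that object a summand of an object of the other half.
-/

open CategoryTheory CategoryTheory.Limits CategoryTheory.Pretriangulated

attribute [local instance] CategoryTheory.Limits.hasBinaryBiproducts_of_finite_biproducts

universe v u

namespace ClusterPaper

variable {T : Type u} [Category.{v} T] [Preadditive T] [HasZeroObject T]
  [HasShift T ℤ] [∀ n : ℤ, (shiftFunctor T n).Additive] [Pretriangulated T]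
  [HasFiniteBiproducts T]

set_option linter.unusedSectionVars false

namespace IsSummand

lemma of_iso {X Y : T} (e : X ≅ Y) : IsSummand X Y := ⟨e.hom, e.inv, e.hom_inv_id⟩

lemma trans {X Y Z : T} (h₁ : IsSummand X Y) (h₂ : IsSummand Y Z) : IsSummand X Z := by
  obtain ⟨s, r, h⟩ := h₁
  obtain ⟨s', r', h'⟩ := h₂
  exact ⟨s ≫ s', r' ≫ r, by rw [Category.assoc, reassoc_of% h', h]⟩

end IsSummand

/-! ### Direct sums and direct summands -/

/-- Splitting off the first summand of a finite direct sum. -/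
lemma biproduct_fin_succ_iso {n : ℕ} (f : Fin (n + 1) → T) :
    Nonempty ((⨁ f) ≅ f 0 ⊞ ⨁ (fun i : Fin n => f i.succ)) := by
  refine ⟨⟨biprod.lift (biproduct.π f 0) (biproduct.lift fun i => biproduct.π f i.succ),
    biprod.desc (biproduct.ι f 0) (biproduct.desc fun i => biproduct.ι f i.succ), ?_, ?_⟩⟩
  · rw [biprod.lift_desc, biproduct.lift_desc, ← biproduct.total, Fin.sum_univ_succ]
  · ext i j
    · simp
    · simp [(Fin.succ_ne_zero _).symm]
    · simp [Fin.succ_ne_zero]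
    · by_cases hij : i = j
      · subst hij
        simp
      · simp [hij]

/-- A summand of `A ⊞ B` with local endomorphism ring is a summand of `A` or of `B`. -/
lemma isSummand_or_of_isLocalRing {X A B : T} (hX : IsLocalRing (End X))
    (h : IsSummand X (A ⊞ B)) : IsSummand X A ∨ IsSummand X B := by
  obtain ⟨s, r, hsr⟩ := h
  let a : End X := (s ≫ biprod.fst) ≫ (biprod.inl ≫ r)
  let b : End X := (s ≫ biprod.snd) ≫ (biprod.inr ≫ r)
  have hab : a + b = 1 := by
    change (s ≫ biprod.fst) ≫ (biprod.inl ≫ r) + (s ≫ biprod.snd) ≫ (biprod.inr ≫ r) = 𝟙 X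
    have : s ≫ (biprod.fst ≫ biprod.inl + biprod.snd ≫ biprod.inr) ≫ r = 𝟙 X := by
      rw [biprod.total, Category.id_comp, hsr]
    simpa only [Preadditive.add_comp, Preadditive.comp_add, Category.assoc] using this
  have key : ∀ {Y : T} (p : X ⟶ Y) (q : Y ⟶ X), IsIso (p ≫ q) → IsSummand X Y :=
    fun p q _ => ⟨p, q ≫ inv (p ≫ q), by rw [← Category.assoc, IsIso.hom_inv_id]⟩
  rcases IsLocalRing.isUnit_or_isUnit_of_add_one hab with h | h
  · exact Or.inl (key _ _ ((isUnit_iff_isIso a).1 h))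
  · exact Or.inr (key _ _ ((isUnit_iff_isIso b).1 h))

lemma plusCat_isoClosed (U V : T → Prop) : IsoClosed (plusCat U V) := by
  rintro X Y e ⟨A, B, hA, hB, ⟨e'⟩⟩
  exact ⟨A, B, hA, hB, ⟨e.symm ≪≫ e'⟩⟩

lemma plusCat_biproduct {U V : T → Prop} (hUsum : SumClosed U) (hVsum : SumClosed V)
    (hU0 : ∀ Z, IsZero Z → U Z) (hV0 : ∀ Z, IsZero Z → V Z) :
    ∀ {n : ℕ} (f : Fin n → T), (∀ i, U (f i) ∨ V (f i)) → plusCat U V (⨁ f) := by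
  intro n
  induction n with
  | zero =>
    intro f _
    have hz : IsZero (⨁ f) := by
      rw [IsZero.iff_id_eq_zero]
      ext i
      exact i.elim0
    have hz' : IsZero ((⨁ f) ⊞ (⨁ f)) := by
      rw [IsZero.iff_id_eq_zero]
      exact biprod.hom_ext' _ _ (hz.eq_of_src _ _) (hz.eq_of_src _ _)
    exact ⟨⨁ f, ⨁ f, hU0 _ hz, hV0 _ hz, ⟨hz.iso hz'⟩⟩
  | succ n ih =>
    intro f hf
    obtain ⟨e₀⟩ := biproduct_fin_succ_iso f
    obtain ⟨A, B, hA, hB, ⟨e⟩⟩ := ih (fun i => f i.succ) (fun i => hf i.succ)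
    have e₁ : (⨁ f) ≅ f 0 ⊞ (A ⊞ B) := e₀ ≪≫ biprod.mapIso (Iso.refl _) e
    rcases hf 0 with h | h
    · exact ⟨f 0 ⊞ A, B, hUsum h hA, hB, ⟨e₁ ≪≫ (biprod.associator _ _ _).symm⟩⟩
    · exact ⟨A, B ⊞ f 0, hA, hVsum hB h,
        ⟨e₁ ≪≫ biprod.braiding _ _ ≪≫ biprod.associator _ _ _⟩⟩

/-- In a Krull–Schmidt category, `U + V` inherits closure under direct summands. -/
lemma plusCat_summandClosed (hKS : IsKrullSchmidt (T := T)) {U V : T → Prop}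
    (hUsum : SumClosed U) (hVsum : SumClosed V)
    (hUs : SummandClosed U) (hVs : SummandClosed V)
    (hU0 : ∀ Z, IsZero Z → U Z) (hV0 : ∀ Z, IsZero Z → V Z) :
    SummandClosed (plusCat U V) := by
  rintro X Z hXZ ⟨A, B, hA, hB, ⟨e⟩⟩
  obtain ⟨n, f, ⟨e'⟩, hf⟩ := hKS X
  refine plusCat_isoClosed U V e'.symm (plusCat_biproduct hUsum hVsum hU0 hV0 f fun i => ?_)
  have hi : IsSummand (f i) (⨁ f) := ⟨biproduct.ι f i, biproduct.π f i, by simp⟩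
  have h := ((hi.trans (.of_iso e'.symm)).trans hXZ).trans (.of_iso e)
  exact (isSummand_or_of_isLocalRing (hf i) h).imp (fun h => hUs h hA) (fun h => hVs h hB)

/-! ### Orthogonality -/

section Exactness

variable {A B D Y : T} {f : A ⟶ B} {g : B ⟶ D} {h : D ⟶ A⟦(1 : ℤ)⟧}

lemma exists_lift_of_comp_eq_zero (hT : Triangle.mk f g h ∈ distTriang T) (φ : Y ⟶ D)
    (hφ : φ ≫ h = 0) : ∃ ψ : Y ⟶ B, ψ ≫ g = φ := by
  obtain ⟨ψ, hψ⟩ := Triangle.coyoneda_exact₃ _ hT φ hφ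
  exact ⟨ψ, hψ.symm⟩

lemma exists_desc_of_comp_eq_zero (hT : Triangle.mk f g h ∈ distTriang T) (φ : B ⟶ Y)
    (hφ : f ≫ φ = 0) : ∃ ψ : D ⟶ Y, g ≫ ψ = φ := by
  obtain ⟨ψ, hψ⟩ := Triangle.yoneda_exact₂ _ hT φ hφ
  exact ⟨ψ, hψ.symm⟩

/-- The obstruction to extending `φ : A ⟶ Y` along `f : A ⟶ B` is `h ≫ φ[1]`. -/
lemma exists_extension_of_comp_eq_zero (hT : Triangle.mk f g h ∈ distTriang T) (φ : A ⟶ Y)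
    (hφ : h ≫ φ⟦(1 : ℤ)⟧' = 0) : ∃ ψ : B ⟶ Y, f ≫ ψ = φ := by
  obtain ⟨ψ, hψ⟩ : ∃ ψ : B⟦(1 : ℤ)⟧ ⟶ Y⟦(1 : ℤ)⟧, (-f⟦(1 : ℤ)⟧') ≫ ψ = φ⟦(1 : ℤ)⟧' :=
    exists_desc_of_comp_eq_zero (rot_of_distTriang _ (rot_of_distTriang _ hT)) _ hφ
  refine ⟨-(shiftFunctor T (1 : ℤ)).preimage ψ, (shiftFunctor T (1 : ℤ)).map_injective ?_⟩
  simpa using hψ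

end Exactness

lemma Ext1Zero.shift {X Y : T} (h : Ext1Zero X Y) (φ : X⟦(1 : ℤ)⟧ ⟶ Y⟦(1 : ℤ)⟧⟦(1 : ℤ)⟧) :
    φ = 0 := by
  rw [← (shiftFunctor T (1 : ℤ)).map_preimage φ, h ((shiftFunctor T (1 : ℤ)).preimage φ),
    Functor.map_zero]

lemma Ext1Zero.of_iso_left {X X' Y : T} (e : X' ≅ X) (h : Ext1Zero X Y) : Ext1Zero X' Y :=
  fun φ => by rw [← cancel_epi e.inv, h (e.inv ≫ φ), comp_zero]

lemma Ext1Zero.of_iso_right {X Y Y' : T} (e : Y' ≅ Y) (h : Ext1Zero X Y) : Ext1Zero X Y' :=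
  fun φ => by
    rw [← cancel_mono (e.hom⟦(1 : ℤ)⟧'), h (φ ≫ e.hom⟦(1 : ℤ)⟧'), zero_comp]

lemma Ext1Zero.biprod_left {A B Y : T} (hA : Ext1Zero A Y) (hB : Ext1Zero B Y) :
    Ext1Zero (A ⊞ B) Y := fun φ => by
  ext
  · rw [hA (biprod.inl ≫ φ), comp_zero]
  · rw [hB (biprod.inr ≫ φ), comp_zero]

lemma Ext1Zero.biprod_right {X A B : T} (hA : Ext1Zero X A) (hB : Ext1Zero X B) :
    Ext1Zero X (A ⊞ B) := fun φ => by
  rw [← Category.comp_id φ, ← (shiftFunctor T (1 : ℤ)).map_id, ← biprod.total, Functor.map_add, Functor.map_comp,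
    Functor.map_comp, Preadditive.comp_add, ← Category.assoc, ← Category.assoc,
    hA (φ ≫ biprod.fst⟦(1 : ℤ)⟧'), hB (φ ≫ biprod.snd⟦(1 : ℤ)⟧'), zero_comp, zero_comp, add_zero]

namespace CotorsionPair

variable {U V : T → Prop}

/-- The first half of a cotorsion pair contains every object left orthogonal to the second half. -/
lemma mem_fst (h : CotorsionPair U V) {X : T} (hX : ∀ ⦃Y : T⦄, V Y → Ext1Zero X Y) : U X := by
  obtain ⟨VB, UB, f, g, k, hV, hU, hT⟩ := h.tri_left X
  obtain ⟨s, hs⟩ := exists_lift_of_comp_eq_zero hT (𝟙 X) (by rw [hX hV k, comp_zero])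
  exact h.summandClosed_fst ⟨s, g, hs⟩ hU

/-- The second half of a cotorsion pair contains every object right orthogonal to the first half. -/
lemma mem_snd (h : CotorsionPair U V) {X : T} (hX : ∀ ⦃Y : T⦄, U Y → Ext1Zero Y X) : V X := by
  obtain ⟨VB, UB, f, g, k, hV, hU, hT⟩ := h.tri_right X
  obtain ⟨r, hr⟩ := exists_extension_of_comp_eq_zero hT (𝟙 X) (by rw [hX hU k, zero_comp])
  exact h.summandClosed_snd ⟨f, r, hr⟩ hV

lemma zero_fst (h : CotorsionPair U V) (Z : T) (hZ : IsZero Z) : U Z :=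
  h.mem_fst fun _ _ _ => hZ.eq_of_src _ _

lemma zero_snd (h : CotorsionPair U V) (Z : T) (hZ : IsZero Z) : V Z :=
  h.mem_snd fun _ _ _ => ((shiftFunctor T (1 : ℤ)).map_isZero hZ).eq_of_tgt _ _

lemma extClosed_fst (h : CotorsionPair U V) : ExtClosed U := by
  intro A B D f g k hT hA hD
  refine h.mem_fst fun Y hY φ => ?_
  obtain ⟨ψ, rfl⟩ := exists_desc_of_comp_eq_zero hT φ (h.ext_zero hA hY _)
  rw [h.ext_zero hD hY ψ, comp_zero]

end CotorsionPair

/-! ### Splitting octahedra -/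

/-- The cone of a composite is the direct sum of the two cones as soon as the connecting morphism
between these vanishes. -/
lemma octahedron_split [IsTriangulated T] {X₁ X₂ X₃ Z₁₂ Z₂₃ Z₁₃ : T}
    {u₁₂ : X₁ ⟶ X₂} {u₂₃ : X₂ ⟶ X₃}
    {v₁₂ : X₂ ⟶ Z₁₂} {w₁₂ : Z₁₂ ⟶ X₁⟦(1 : ℤ)⟧} (h₁₂ : Triangle.mk u₁₂ v₁₂ w₁₂ ∈ distTriang T)
    {v₂₃ : X₃ ⟶ Z₂₃} {w₂₃ : Z₂₃ ⟶ X₂⟦(1 : ℤ)⟧} (h₂₃ : Triangle.mk u₂₃ v₂₃ w₂₃ ∈ distTriang T)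
    {v₁₃ : X₃ ⟶ Z₁₃} {w₁₃ : Z₁₃ ⟶ X₁⟦(1 : ℤ)⟧}
    (h₁₃ : Triangle.mk (u₁₂ ≫ u₂₃) v₁₃ w₁₃ ∈ distTriang T)
    (hz : ∀ φ : Z₂₃ ⟶ Z₁₂⟦(1 : ℤ)⟧, φ = 0) : Nonempty (Z₁₃ ≅ Z₁₂ ⊞ Z₂₃) := by
  let O := Triangulated.someOctahedron rfl h₁₂ h₂₃ h₁₃
  obtain ⟨e, -⟩ := exists_iso_binaryBiproduct_of_distTriang _ O.mem (hz _)
  exact ⟨e⟩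

lemma unshift_biprod_iso {X A B : T} (e : X⟦(1 : ℤ)⟧ ≅ A⟦(1 : ℤ)⟧ ⊞ B⟦(1 : ℤ)⟧) :
    Nonempty (X ≅ A ⊞ B) := by
  have : PreservesBinaryBiproduct A B (shiftFunctor T (1 : ℤ)) :=
    preservesBinaryBiproduct_of_preservesBiproduct _ _ _
  exact ⟨(shiftFunctor T (1 : ℤ)).preimageIso
    (e ≪≫ ((shiftFunctor T (1 : ℤ)).mapBiprod A B).symm)⟩

lemma plusCat_comm {U V : T → Prop} {X : T} (h : plusCat U V X) : plusCat V U X := by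
  obtain ⟨A, B, hA, hB, ⟨e⟩⟩ := h
  exact ⟨B, A, hB, hA, ⟨e ≪≫ biprod.braiding _ _⟩⟩

section Triangles

variable [IsTriangulated T] {U V : T → Prop}

/-- The triangle `K_B → C_B → B`, from the composite `C_B → U_B → B`. -/
lemma exists_tri_CK_left (hUV : CotorsionPair U V) (hVU : CotorsionPair V U) (B : T) :
    ∃ (K D : T) (f : K ⟶ D) (g : D ⟶ B) (h : B ⟶ K⟦(1 : ℤ)⟧),
      plusCat U V K ∧ (U D ∧ V D) ∧ Triangle.mk f g h ∈ distTriang T := by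
  obtain ⟨VB, UB, f, g, h, hVB, hUB, hT⟩ := hUV.tri_left B
  obtain ⟨U', D, f', g', h', hU', hD, hT'⟩ := hVU.tri_left UB
  obtain ⟨X, a, b, hX⟩ := distinguished_cocone_triangle₁ (g' ≫ g)
  obtain ⟨e⟩ := octahedron_split (rot_of_distTriang _ hT') (rot_of_distTriang _ hT)
    (rot_of_distTriang _ hX) (hVU.ext_zero hVB hU').shift
  exact ⟨X, D, a, g' ≫ g, b, ⟨U', VB, hU', hVB, unshift_biprod_iso e⟩,
    ⟨hUV.extClosed_fst _ _ _ hT' hU' hUB, hD⟩, hX⟩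

/-- The triangle `B → K^B → C^B`, from the composite `C^B → U^B → B[1]`. -/
lemma exists_tri_CK_right (hUV : CotorsionPair U V) (hVU : CotorsionPair V U) (B : T) :
    ∃ (K D : T) (f : B ⟶ K) (g : K ⟶ D) (h : D ⟶ B⟦(1 : ℤ)⟧),
      plusCat U V K ∧ (U D ∧ V D) ∧ Triangle.mk f g h ∈ distTriang T := by
  obtain ⟨VB, UB, f, g, h, hVB, hUB, hT⟩ := hUV.tri_right B
  obtain ⟨U', D, f', g', h', hU', hD, hT'⟩ := hVU.tri_left UB
  obtain ⟨X, a, b, hX⟩ := distinguished_cocone_triangle₂ (g' ≫ h)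
  obtain ⟨e⟩ := octahedron_split (rot_of_distTriang _ hT')
    (rot_of_distTriang _ (rot_of_distTriang _ hT))
    (rot_of_distTriang _ (rot_of_distTriang _ hX)) (hVU.ext_zero hVB hU').shift
  exact ⟨X, D, a, b, g' ≫ h, ⟨U', VB, hU', hVB, unshift_biprod_iso e⟩,
    ⟨hUV.extClosed_fst _ _ _ hT' hU' hUB, hD⟩, hX⟩

/-- The triangle `B → C^B → K^B`, from the composite `B → U^B → C^B`. -/
lemma exists_tri_KC_right (hUV : CotorsionPair U V) (hVU : CotorsionPair V U) (B : T) :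
    ∃ (D K : T) (f : B ⟶ D) (g : D ⟶ K) (h : K ⟶ B⟦(1 : ℤ)⟧),
      (U D ∧ V D) ∧ plusCat U V K ∧ Triangle.mk f g h ∈ distTriang T := by
  obtain ⟨UB, VB, f, g, h, hUB, hVB, hT⟩ := hVU.tri_right B
  obtain ⟨D, U', f', g', h', hD, hU', hT'⟩ := hUV.tri_right UB
  obtain ⟨X, a, b, hX⟩ := distinguished_cocone_triangle (f ≫ f')
  obtain ⟨e⟩ := octahedron_split hT hT' hX (hUV.ext_zero hU' hVB)
  exact ⟨D, X, f ≫ f', a, b, ⟨hUV.extClosed_fst _ _ _ hT' hUB hU', hD⟩,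
    plusCat_comm ⟨VB, U', hVB, hU', ⟨e⟩⟩, hX⟩

/-- The triangle `C_B → K_B → B`, from the composite `B → U_B[1] → C_B[1]`. -/
lemma exists_tri_KC_left (hUV : CotorsionPair U V) (hVU : CotorsionPair V U) (B : T) :
    ∃ (D K : T) (f : D ⟶ K) (g : K ⟶ B) (h : B ⟶ D⟦(1 : ℤ)⟧),
      (U D ∧ V D) ∧ plusCat U V K ∧ Triangle.mk f g h ∈ distTriang T := by
  obtain ⟨UB, VB, f, g, h, hUB, hVB, hT⟩ := hVU.tri_left B
  obtain ⟨D, U', f', g', h', hD, hU', hT'⟩ := hUV.tri_right UB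
  -- The sign is the one introduced by rotating the triangle of `f'` three times.
  obtain ⟨X, a, b, hX⟩ := distinguished_cocone_triangle₂ (h ≫ (-f'⟦(1 : ℤ)⟧'))
  obtain ⟨e⟩ := octahedron_split (rot_of_distTriang _ (rot_of_distTriang _ hT))
    (rot_of_distTriang _ (rot_of_distTriang _ (rot_of_distTriang _ hT')))
    (rot_of_distTriang _ (rot_of_distTriang _ hX)) (hUV.ext_zero hU' hVB).shift
  exact ⟨D, X, a, b, _, ⟨hUV.extClosed_fst _ _ _ hT' hUB hU', hD⟩,
    plusCat_comm ⟨VB, U', hVB, hU', unshift_biprod_iso e⟩, hX⟩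

end Triangles

/-- If `(U,V)` and `(V,U)` are cotorsion pairs, `C := U ∩ V` and `K := U + V`,
then `(C,K)` and `(K,C)` are cotorsion pairs; in particular `C` is pre-cluster tilting. -/
theorem stmt1 [IsTriangulated T] (hKS : IsKrullSchmidt (T := T))
    (U V : T → Prop) (hUiso : IsoClosed U) (hUsum : SumClosed U)
    (hViso : IsoClosed V) (hVsum : SumClosed V)
    (hUV : CotorsionPair U V) (hVU : CotorsionPair V U) :
    CotorsionPair (fun X => U X ∧ V X) (plusCat U V) ∧
    CotorsionPair (plusCat U V) (fun X => U X ∧ V X) ∧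
    PreClusterTilting (fun X => U X ∧ V X) := by
  have hCs : SummandClosed (fun X => U X ∧ V X) := fun X Z h hZ =>
    ⟨hUV.summandClosed_fst h hZ.1, hUV.summandClosed_snd h hZ.2⟩
  have hKs : SummandClosed (plusCat U V) := plusCat_summandClosed hKS hUsum hVsum
    hUV.summandClosed_fst hUV.summandClosed_snd hUV.zero_fst hUV.zero_snd
  have hCK : CotorsionPair (fun X => U X ∧ V X) (plusCat U V) :=
    { summandClosed_fst := hCs
      summandClosed_snd := hKs
      ext_zero := by
        rintro X Y ⟨hXU, hXV⟩ ⟨A, B, hA, hB, ⟨e⟩⟩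
        exact ((hVU.ext_zero hXV hA).biprod_right (hUV.ext_zero hXU hB)).of_iso_right e
      tri_left := exists_tri_CK_left hUV hVU
      tri_right := exists_tri_CK_right hUV hVU }
  have hKC : CotorsionPair (plusCat U V) (fun X => U X ∧ V X) :=
    { summandClosed_fst := hKs
      summandClosed_snd := hCs
      ext_zero := by
        rintro X Y ⟨A, B, hA, hB, ⟨e⟩⟩ ⟨hYU, hYV⟩
        exact ((hUV.ext_zero hA hYV).biprod_left (hVU.ext_zero hB hYU)).of_iso_left e
      tri_left := exists_tri_KC_left hUV hVU
      tri_right := exists_tri_KC_right hUV hVU }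
  refine ⟨hCK, hKC, ?_⟩
  exact
    { sumClosed := fun X Y hX hY => ⟨hUsum hX.1 hY.1, hVsum hX.2 hY.2⟩
      summandClosed := hCs
      rigid := fun X Y hX hY => hUV.ext_zero hX.1 hY.2
      contravariantlyFinite := fun X => by
        obtain ⟨K, D, f, g, h, hK, hD, hT⟩ := hCK.tri_left X
        exact ⟨D, g, hD, fun C' hC' φ =>
          exists_lift_of_comp_eq_zero hT φ (hCK.ext_zero hC' hK _)⟩
      covariantlyFinite := fun X => by
        obtain ⟨D, K, f, g, h, hD, hK, hT⟩ := hKC.tri_right X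
        exact ⟨D, f, hD, fun C' hC' φ =>
          exists_extension_of_comp_eq_zero hT φ (hKC.ext_zero hK hC' _)⟩
      perp_eq := by
        funext X
        refine propext ⟨fun hX Y hY => ?_, fun hX Y hY => ?_⟩
        · exact hKC.ext_zero (hCK.mem_snd hX) hY
        · exact hCK.ext_zero hY (hKC.mem_fst hX) }

end ClusterPaper
end

section
/- Call the coheart of a subcategory U the subcategory U ∩ ^⊥1U, and call such a U maximal if it is maximal with respect to inclusion among the subcategories U' having the same coheart for which there exists V' with both (U',V') and (V',U') cotorsion pairs. Then the assignments U ↦ U ∩ ^⊥1U and C ↦ ^⊥1C are mutually inverse bijections between: (i) the maximal subcategories U for which there exists a subcategory V such that (U,V) and (V,U) are cotorsion pairs, and (ii) the pre-cluster tilting subcategories C of T. -/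
/-!
For a twin `(U, V)`, `(V, U)` of cotorsion pairs one has `V = ^⊥1U` and `U = ^⊥1V`, so both classes
are closed under extensions and the coheart `C = U ∩ ^⊥1U` is `U ∩ V`; it is rigid.
`C`-approximations are obtained by composing a `U`-approximation with a `V`-approximation of an
object of `U`, which lies in `V ∩ U` by extension-closure.

The heart of the argument is `C^⊥1 = ^⊥1C`. Let `X ∈ ^⊥1C`, and take triangles
`V₁ → U₁ → X → V₁[1]` (with last map `h`) and `V₁ → C₀ → V₂ → V₁[1]` (with last map `q`), where
`V₁, V₂ ∈ V`, `U₁ ∈ U`, `C₀ ∈ C`. Since `Ext(X, C₀) = 0`, `h` factors as `k ≫ q`; since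
`Ext(V₂, U₁) = 0`, `q` factors as `m ≫ h`. Hence `(1 - k ≫ m) ≫ h = 0`, so the identity of `X` is
the sum of a map through `V₂` and a map through `U₁`, and `X` is a summand of `U₁ ⊞ V₂`. Both
`Ext(C, U₁)` and `Ext(C, V₂)` vanish, so `X ∈ C^⊥1`. The other inclusion is dual.

Conversely, if `C` is pre-cluster tilting, completing `C`-approximations to triangles shows that
`(C, C^⊥1)` and `(^⊥1C, C)` are cotorsion pairs, so `^⊥1C = C^⊥1` belongs to a twin, with coheart
`C`. Any twin class with coheart `C` is contained in `^⊥1C`, whence `^⊥1C` is the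
maximal one.
-/

open CategoryTheory CategoryTheory.Limits CategoryTheory.Pretriangulated

attribute [local instance] CategoryTheory.Limits.hasBinaryBiproducts_of_finite_biproducts

universe v u

namespace ClusterPaper

variable {T : Type u} [Category.{v} T] [Preadditive T] [HasZeroObject T]
  [HasShift T ℤ] [∀ n : ℤ, (shiftFunctor T n).Additive] [Pretriangulated T]
  [HasFiniteBiproducts T]

/-- The coheart `U ∩ ^⊥1U` of a subcategory `U`. -/
def coheart (U : T → Prop) : T → Prop := fun X => U X ∧ leftPerp U X

/-- There is a subcategory `V` such that both `(U,V)` and `(V,U)` are cotorsion pairs. -/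
def HasTwinCotorsion (U : T → Prop) : Prop :=
  ∃ V : T → Prop, IsoClosed V ∧ SumClosed V ∧ CotorsionPair U V ∧ CotorsionPair V U

/-- `U` is maximal among the subcategories with the same coheart admitting twin
cotorsion pairs. -/
def MaximalTwin (U : T → Prop) : Prop :=
  IsoClosed U ∧ SumClosed U ∧ HasTwinCotorsion U ∧
  ∀ U' : T → Prop, IsoClosed U' → SumClosed U' → HasTwinCotorsion U' →
    coheart U' = coheart U → (∀ X, U X → U' X) → U' = U

set_option linter.unusedSectionVars false

/-! ### Exact sequences and shifted extension groups -/

section Exactness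

variable {A B D X : T} {f : A ⟶ B} {g : B ⟶ D} {h : D ⟶ A⟦(1 : ℤ)⟧}

lemma lift_mor₂ (H : Triangle.mk f g h ∈ distTriang T) (φ : X ⟶ D) (hφ : φ ≫ h = 0) :
    ∃ ψ : X ⟶ B, φ = ψ ≫ g :=
  Triangle.coyoneda_exact₃ _ H φ hφ

lemma lift_mor₃ (H : Triangle.mk f g h ∈ distTriang T) (φ : X ⟶ A⟦(1 : ℤ)⟧)
    (hφ : φ ≫ f⟦(1 : ℤ)⟧' = 0) : ∃ ψ : X ⟶ D, φ = ψ ≫ h :=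
  Triangle.coyoneda_exact₁ _ H φ hφ

lemma desc_mor₂ (H : Triangle.mk f g h ∈ distTriang T) (φ : B ⟶ X) (hφ : f ≫ φ = 0) :
    ∃ ψ : D ⟶ X, φ = g ≫ ψ :=
  Triangle.yoneda_exact₂ _ H φ hφ

lemma desc_mor₃ (H : Triangle.mk f g h ∈ distTriang T) (φ : D ⟶ X) (hφ : g ≫ φ = 0) :
    ∃ ψ : A⟦(1 : ℤ)⟧ ⟶ X, φ = h ≫ ψ :=
  Triangle.yoneda_exact₃ _ H φ hφ

lemma comp_mor₁₂ (H : Triangle.mk f g h ∈ distTriang T) : f ≫ g = 0 :=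
  comp_distTriang_mor_zero₁₂ _ H

lemma comp_mor₂₃ (H : Triangle.mk f g h ∈ distTriang T) : g ≫ h = 0 :=
  comp_distTriang_mor_zero₂₃ _ H

lemma comp_mor₃₁ (H : Triangle.mk f g h ∈ distTriang T) : h ≫ f⟦(1 : ℤ)⟧' = 0 :=
  comp_distTriang_mor_zero₃₁ _ H

lemma desc_shift_mor₁ (H : Triangle.mk f g h ∈ distTriang T) (φ : A⟦(1 : ℤ)⟧ ⟶ X)
    (hφ : h ≫ φ = 0) : ∃ ψ : B⟦(1 : ℤ)⟧ ⟶ X, φ = f⟦(1 : ℤ)⟧' ≫ ψ := by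
  have H' : Triangle.mk g h (-f⟦(1 : ℤ)⟧') ∈ distTriang T := rot_of_distTriang _ H
  obtain ⟨ψ, hψ⟩ := desc_mor₃ H' φ hφ
  exact ⟨-ψ, by rw [hψ, Preadditive.neg_comp, Preadditive.comp_neg]⟩

lemma desc_mor₁ (H : Triangle.mk f g h ∈ distTriang T) (φ : A ⟶ X)
    (hφ : h ≫ φ⟦(1 : ℤ)⟧' = 0) : ∃ ψ : B ⟶ X, f ≫ ψ = φ := by
  obtain ⟨ψ, hψ⟩ := desc_shift_mor₁ H _ hφ
  obtain ⟨ψ', rfl⟩ := (shiftFunctor T (1 : ℤ)).map_surjective ψ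
  exact ⟨ψ', (shiftFunctor T (1 : ℤ)).map_injective (by simpa using hψ.symm)⟩

/-- Classes of objects on which `Ext¹(-, X)` vanishes are closed under extensions. -/
lemma ext1Zero_of_triangle (H : Triangle.mk f g h ∈ distTriang T) (hA : Ext1Zero A X)
    (hD : Ext1Zero D X) : Ext1Zero B X := fun φ => by
  obtain ⟨ψ, hψ⟩ := desc_mor₂ H φ (hA _)
  rw [hψ, hD ψ, comp_zero]

end Exactness

/-- A factorization of the identity of `X` as a sum of maps through `Y` and `Z` transfers
the vanishing of `Ext¹(W, -)` from `Y` and `Z` to `X`. -/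
lemma ext1Zero_right_of_split {W X Y Z : T} (k : X ⟶ Y) (m : Y ⟶ X) (l : X ⟶ Z) (n : Z ⟶ X)
    (e : 𝟙 X = k ≫ m + l ≫ n) (hY : Ext1Zero W Y) (hZ : Ext1Zero W Z) : Ext1Zero W X :=
  fun φ => by
    have e' : φ = φ ≫ (k ≫ m + l ≫ n)⟦(1 : ℤ)⟧' := by
      rw [← e, CategoryTheory.Functor.map_id, Category.comp_id]
    rw [e', Functor.map_add, Functor.map_comp, Functor.map_comp, Preadditive.comp_add,
      ← Category.assoc, ← Category.assoc, hY (φ ≫ _), hZ (φ ≫ _), zero_comp, zero_comp, add_zero]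

lemma ext1Zero_left_of_split {W X Y Z : T} (k : X ⟶ Y) (m : Y ⟶ X) (l : X ⟶ Z) (n : Z ⟶ X)
    (e : 𝟙 X = k ≫ m + l ≫ n) (hY : Ext1Zero Y W) (hZ : Ext1Zero Z W) : Ext1Zero X W :=
  fun φ => by
    have e' : φ = (k ≫ m + l ≫ n) ≫ φ := by rw [← e, Category.id_comp]
    rw [e', Preadditive.add_comp, Category.assoc, Category.assoc, hY (m ≫ φ), hZ (n ≫ φ),
      comp_zero, comp_zero, add_zero]

/-! ### Perpendicular classes -/

lemma isoClosed_of_summandClosed {P : T → Prop} (h : SummandClosed P) : IsoClosed P :=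
  fun _ _ e hX => h ⟨e.inv, e.hom, e.inv_hom_id⟩ hX

lemma leftPerp_summandClosed (P : T → Prop) : SummandClosed (leftPerp P) := by
  rintro X Z ⟨s, r, hsr⟩ hZ C hC
  exact ext1Zero_left_of_split s r (0 : X ⟶ Z) r (by simp [hsr]) (hZ hC) (hZ hC)

lemma leftPerp_sumClosed (P : T → Prop) : SumClosed (leftPerp P) := by
  intro X Y hX hY C hC
  exact ext1Zero_left_of_split (biprod.fst : X ⊞ Y ⟶ X) biprod.inl biprod.snd biprod.inr
    (by simp [biprod.total]) (hX hC) (hY hC)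

section Twin

variable {U V : T → Prop}

/-- In a cotorsion pair the left class is the left perpendicular of the right class. -/
lemma CotorsionPair.fst_eq (h : CotorsionPair U V) : U = leftPerp V := by
  funext X
  refine propext ⟨fun hX C hC => h.ext_zero hX hC, fun hX => ?_⟩
  obtain ⟨V₀, U₀, f, g, p, hV, hU, H⟩ := h.tri_left X
  -- the connecting map vanishes, so the approximation `U₀ ⟶ X` splits
  obtain ⟨s, hs⟩ := lift_mor₂ H (𝟙 X) (by rw [hX hV p, comp_zero])
  exact h.summandClosed_fst ⟨s, g, hs.symm⟩ hU

lemma CotorsionPair.extClosed (h : CotorsionPair U V) : ExtClosed U := by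
  intro A B D f g p H hA hD
  rw [h.fst_eq] at hA hD ⊢
  exact fun C hC => ext1Zero_of_triangle H (hA hC) (hD hC)

lemma coheart_eq (hVU : CotorsionPair V U) : coheart U = fun X => U X ∧ V X := by
  conv_rhs => rw [hVU.fst_eq]
  rfl

/-- An object of `V` has a left approximation triangle by the coheart, with cokernel in `V`. -/
lemma twin_tri_right (hVU : CotorsionPair V U) {A : T} (hA : V A) :
    ∃ (C₀ V₀ : T) (f : A ⟶ C₀) (g : C₀ ⟶ V₀) (h : V₀ ⟶ A⟦(1 : ℤ)⟧),
      U C₀ ∧ V C₀ ∧ V V₀ ∧ Triangle.mk f g h ∈ distTriang T := by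
  obtain ⟨U₀, V₀, f, g, h, hU, hV, H⟩ := hVU.tri_right A
  exact ⟨U₀, V₀, f, g, h, hU, hVU.extClosed f g h H hA hV, hV, H⟩

variable (hUV : CotorsionPair U V) (hVU : CotorsionPair V U)
include hUV hVU

/-- An object of `U` has a right approximation triangle by the coheart, with kernel in `U`. -/
lemma twin_tri_left {A : T} (hA : U A) :
    ∃ (U₀ C₀ : T) (f : U₀ ⟶ C₀) (g : C₀ ⟶ A) (h : A ⟶ U₀⟦(1 : ℤ)⟧),
      U U₀ ∧ U C₀ ∧ V C₀ ∧ Triangle.mk f g h ∈ distTriang T := by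
  obtain ⟨U₀, V₀, f, g, h, hU, hV, H⟩ := hVU.tri_left A
  exact ⟨U₀, V₀, f, g, h, hU, hUV.extClosed f g h H hU hA, hV, H⟩

/-- An object `X` of `^⊥1C`, `C` the coheart, is a summand of the sum of an object of `U` and an
object of `V`: its identity is `k ≫ m + l ≫ g` below. -/
lemma twin_leftPerp_le {X : T} (hX : leftPerp (coheart U) X) : rightPerp (coheart U) X := by
  rw [coheart_eq hVU] at hX ⊢
  obtain ⟨V₁, U₁, f, g, h, hV₁, hU₁, H⟩ := hUV.tri_left X
  obtain ⟨C₀, V₂, a, p, q, hCU, hCV, hV₂, H'⟩ := twin_tri_right hVU hV₁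
  obtain ⟨k, hk⟩ := lift_mor₃ H' h (hX ⟨hCU, hCV⟩ _)
  obtain ⟨m, hm⟩ := lift_mor₃ H q (hVU.ext_zero hV₂ hU₁ _)
  obtain ⟨l, hl⟩ := lift_mor₂ H (𝟙 X - k ≫ m) (by
    rw [Preadditive.sub_comp, Category.assoc, ← hm, ← hk, Category.id_comp, sub_self])
  intro C hC
  exact ext1Zero_right_of_split k m l g (by rw [← hl, add_sub_cancel])
    (hUV.ext_zero hC.1 hV₂) (hVU.ext_zero hC.2 hU₁)

lemma twin_rightPerp_le {X : T} (hX : rightPerp (coheart U) X) : leftPerp (coheart U) X := by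
  rw [coheart_eq hVU] at hX ⊢
  obtain ⟨V₁, U₁, f, g, h, hV₁, hU₁, H⟩ := hUV.tri_right X
  obtain ⟨U₂, C₀, a, p, q, hU₂, hCU, hCV, H'⟩ := twin_tri_left hUV hVU hU₁
  obtain ⟨k, hk⟩ := desc_mor₃ H' h (hX ⟨hCU, hCV⟩ _)
  obtain ⟨m, hm⟩ := desc_mor₃ H q (hVU.ext_zero hV₁ hU₂ _)
  obtain ⟨k, rfl⟩ := (shiftFunctor T (1 : ℤ)).map_surjective k
  obtain ⟨m, rfl⟩ := (shiftFunctor T (1 : ℤ)).map_surjective m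
  obtain ⟨l, hl⟩ := desc_mor₁ H (𝟙 X - m ≫ k) (by
    rw [Functor.map_sub, Functor.map_comp, Preadditive.comp_sub, ← Category.assoc, ← hm, ← hk,
      CategoryTheory.Functor.map_id, Category.comp_id, sub_self])
  intro C hC
  exact ext1Zero_left_of_split m k f l (by rw [hl, add_sub_cancel])
    (hUV.ext_zero hU₂ hC.2) (hVU.ext_zero hV₁ hC.1)

lemma twin_contravariantlyFinite : ContravariantlyFinite (coheart U) := by
  rw [coheart_eq hVU]
  intro X
  obtain ⟨V₁, U₁, f, g, h, hV₁, hU₁, H⟩ := hUV.tri_left X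
  obtain ⟨U₂, C₀, a, p, q, hU₂, hCU, hCV, H'⟩ := twin_tri_left hUV hVU hU₁
  refine ⟨C₀, p ≫ g, ⟨hCU, hCV⟩, fun C hC φ => ?_⟩
  obtain ⟨ψ, hψ⟩ := lift_mor₂ H φ (hUV.ext_zero hC.1 hV₁ _)
  obtain ⟨χ, hχ⟩ := lift_mor₂ H' ψ (hVU.ext_zero hC.2 hU₂ _)
  exact ⟨χ, by rw [hψ, hχ, Category.assoc]⟩

lemma twin_covariantlyFinite : CovariantlyFinite (coheart U) := by
  rw [coheart_eq hVU]
  intro X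
  obtain ⟨V₁, U₁, f, g, h, hV₁, hU₁, H⟩ := hUV.tri_right X
  obtain ⟨C₀, V₂, a, p, q, hCU, hCV, hV₂, H'⟩ := twin_tri_right hVU hV₁
  refine ⟨C₀, f ≫ a, ⟨hCU, hCV⟩, fun C hC φ => ?_⟩
  obtain ⟨ψ, hψ⟩ := desc_mor₁ H φ (hUV.ext_zero hU₁ hC.2 _)
  obtain ⟨χ, hχ⟩ := desc_mor₁ H' ψ (hVU.ext_zero hV₂ hC.1 _)
  exact ⟨χ, by rw [Category.assoc, hχ, hψ]⟩

/-- The coheart of a twin of cotorsion pairs is pre-cluster tilting. -/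
lemma twin_preClusterTilting : PreClusterTilting (coheart U) where
  sumClosed X Y hX hY := by
    refine ⟨?_, leftPerp_sumClosed U hX.2 hY.2⟩
    have hX' := hX.1
    have hY' := hY.1
    rw [hUV.fst_eq] at hX' hY' ⊢
    exact leftPerp_sumClosed V hX' hY'
  summandClosed _ _ h hZ :=
    ⟨hUV.summandClosed_fst h hZ.1, leftPerp_summandClosed U h hZ.2⟩
  rigid _ _ hX hY := hX.2 hY.1
  contravariantlyFinite := twin_contravariantlyFinite hUV hVU
  covariantlyFinite := twin_covariantlyFinite hUV hVU
  perp_eq := by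
    funext X
    exact propext ⟨twin_rightPerp_le hUV hVU, twin_leftPerp_le hUV hVU⟩

lemma twin_le_leftPerp_coheart {X : T} (hX : U X) : leftPerp (coheart U) X := by
  rw [coheart_eq hVU]
  exact fun C hC => hUV.ext_zero hX hC.2

end Twin

/-! ### The twin of cotorsion pairs of a pre-cluster tilting class -/

section PreClusterTilting

variable {C : T → Prop} (hC : PreClusterTilting C)
include hC

/-- The cone of a left `C`-approximation lies in `^⊥1C`. -/
lemma leftPerp_of_leftApprox {A C₀ D : T} {f : A ⟶ C₀} {g : C₀ ⟶ D} {h : D ⟶ A⟦(1 : ℤ)⟧}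
    (H : Triangle.mk f g h ∈ distTriang T) (hC₀ : C C₀) (hf : IsLeftApprox C f) :
    leftPerp C D := by
  intro C' hC' φ
  obtain ⟨ψ, hψ⟩ := desc_mor₃ H φ (hC.rigid hC₀ hC' _)
  obtain ⟨ψ, rfl⟩ := (shiftFunctor T (1 : ℤ)).map_surjective ψ
  obtain ⟨χ, rfl⟩ := hf hC' ψ
  rw [hψ, Functor.map_comp, ← Category.assoc, comp_mor₃₁ H, zero_comp]

/-- The cocone of a right `C`-approximation lies in `C^⊥1`. -/
lemma rightPerp_of_rightApprox {A C₀ D : T} {f : A ⟶ C₀} {g : C₀ ⟶ D} {h : D ⟶ A⟦(1 : ℤ)⟧}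
    (H : Triangle.mk f g h ∈ distTriang T) (hC₀ : C C₀) (hg : IsRightApprox C g) :
    rightPerp C A := by
  intro C' hC' φ
  obtain ⟨ψ, hψ⟩ := lift_mor₃ H φ (hC.rigid hC' hC₀ _)
  obtain ⟨χ, rfl⟩ := hg hC' ψ
  rw [hψ, Category.assoc, comp_mor₂₃ H, comp_zero]

/-- The right triangle of `(C, C^⊥1)` at `B` is a rotation of the triangle on a
`C`-approximation `C₀ ⟶ B⟦1⟧`. -/
lemma cotorsionPair_rightPerp : CotorsionPair C (leftPerp C) where
  summandClosed_fst := hC.summandClosed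
  summandClosed_snd := leftPerp_summandClosed C
  ext_zero X Y hX hY := by
    rw [← hC.perp_eq] at hY
    exact hY hX
  tri_left B := by
    obtain ⟨C₀, g, hC₀, hg⟩ := hC.contravariantlyFinite B
    obtain ⟨K, f, h, H⟩ := distinguished_cocone_triangle₁ g
    refine ⟨K, C₀, f, g, h, ?_, hC₀, H⟩
    rw [← hC.perp_eq]
    exact rightPerp_of_rightApprox hC H hC₀ hg
  tri_right B := by
    obtain ⟨C₀, g, hC₀, hg⟩ := hC.contravariantlyFinite (B⟦(1 : ℤ)⟧)
    obtain ⟨K, f, h, H⟩ := distinguished_cocone_triangle₂ g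
    refine ⟨K, C₀, f, h, g, ?_, hC₀, H⟩
    rw [← hC.perp_eq]
    intro C' hC' φ
    have H' : Triangle.mk h g (-f⟦(1 : ℤ)⟧') ∈ distTriang T := rot_of_distTriang _ H
    obtain ⟨ψ, hψ⟩ := lift_mor₃ H' φ (hC.rigid hC' hC₀ _)
    obtain ⟨χ, hχ⟩ := hg hC' ψ
    rw [hψ, ← hχ, Preadditive.comp_neg, Category.assoc, comp_mor₃₁ H, comp_zero, neg_zero]

/-- The left triangle of `(^⊥1C, C)` at `B` is a rotation of the triangle on a
`C`-approximation `B⟦-1⟧ ⟶ C₀`. -/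
lemma cotorsionPair_leftPerp : CotorsionPair (leftPerp C) C where
  summandClosed_fst := leftPerp_summandClosed C
  summandClosed_snd := hC.summandClosed
  ext_zero X Y hX hY := hX hY
  tri_left B := by
    obtain ⟨C₀, a, hC₀, ha⟩ := hC.covariantlyFinite (B⟦(-1 : ℤ)⟧)
    let e : (B⟦(-1 : ℤ)⟧)⟦(1 : ℤ)⟧ ≅ B := (shiftEquiv T (1 : ℤ)).counitIso.app B
    obtain ⟨K, f, g, H⟩ := distinguished_cocone_triangle₂ (e.inv ≫ a⟦(1 : ℤ)⟧')
    refine ⟨C₀, K, f, g, _, hC₀, ?_, H⟩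
    intro C' hC' φ
    obtain ⟨ψ, hψ⟩ := desc_mor₂ H φ (hC.rigid hC₀ hC' _)
    obtain ⟨χ, hχ⟩ := (shiftFunctor T (1 : ℤ)).map_surjective (e.hom ≫ ψ)
    obtain ⟨ω, rfl⟩ := ha hC' χ
    have hψ' : ψ = (e.inv ≫ a⟦(1 : ℤ)⟧') ≫ ω⟦(1 : ℤ)⟧' := by
      rw [Category.assoc, ← Functor.map_comp, hχ, Iso.inv_hom_id_assoc]
    rw [hψ, hψ', ← Category.assoc, comp_mor₂₃ H, zero_comp]
  tri_right B := by
    obtain ⟨C₀, f, hC₀, hf⟩ := hC.covariantlyFinite B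
    obtain ⟨K, g, h, H⟩ := distinguished_cocone_triangle f
    exact ⟨C₀, K, f, g, h, hC₀, leftPerp_of_leftApprox hC H hC₀ hf, H⟩

lemma coheart_leftPerp : coheart (leftPerp C) = C := by
  rw [coheart_eq (cotorsionPair_rightPerp hC)]
  funext X
  exact propext ⟨fun h => h.2, fun h => ⟨fun D hD => hC.rigid h hD, h⟩⟩

lemma hasTwinCotorsion_leftPerp : HasTwinCotorsion (leftPerp C) :=
  ⟨C, isoClosed_of_summandClosed hC.summandClosed, hC.sumClosed, cotorsionPair_leftPerp hC,
    cotorsionPair_rightPerp hC⟩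

end PreClusterTilting

/-- `U ↦ U ∩ ^⊥1U` and `C ↦ ^⊥1C` are mutually inverse bijections between
maximal subcategories `U` admitting twin cotorsion pairs `(U,V)`, `(V,U)` and
pre-cluster tilting subcategories `C`. -/
theorem stmt2 [IsTriangulated T] (hKS : IsKrullSchmidt (T := T)) :
    (∀ U : T → Prop, MaximalTwin U →
      PreClusterTilting (coheart U) ∧ leftPerp (coheart U) = U) ∧
    (∀ C : T → Prop, IsoClosed C → PreClusterTilting C →
      MaximalTwin (leftPerp C) ∧ coheart (leftPerp C) = C) := by
  constructor
  · rintro U ⟨-, -, ⟨V, -, -, hUV, hVU⟩, hmax⟩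
    have hC := twin_preClusterTilting hUV hVU
    exact ⟨hC, hmax _ (isoClosed_of_summandClosed (leftPerp_summandClosed _))
      (leftPerp_sumClosed _) (hasTwinCotorsion_leftPerp hC) (coheart_leftPerp hC)
      fun X hX => twin_le_leftPerp_coheart hUV hVU hX⟩
  · intro C _ hC
    refine ⟨⟨isoClosed_of_summandClosed (leftPerp_summandClosed _), leftPerp_sumClosed _,
      hasTwinCotorsion_leftPerp hC, ?_⟩, coheart_leftPerp hC⟩
    rintro U' - - ⟨V, -, -, hUV, hVU⟩ hco hle
    rw [coheart_leftPerp hC] at hco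
    funext X
    refine propext ⟨fun hX => ?_, hle X⟩
    rw [← hco]
    exact twin_le_leftPerp_coheart hUV hVU hX

end ClusterPaper
end
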